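/- arXiv:0801.3277 — 2 statements merged into one kernel-verified Lean document; each statement's English description precedes it below -/
import Mathlib

section
/- Let n ≥ 1 and ζ = (ζ_1, …, ζ_n) ∈ ℂ^n, and set x_j = x_j^{(n)}(ζ_1, …, ζ_n) for 1 ≤ j ≤ n. Then for every 0 ≤ l < n, det( I_{n−l} + B((x_{l+1}, x_{l+2}, …, x_n)) · B((x_{l+1}, x_{l+2}, …, x_n))* ) = ∏_{j=1}^{n−l} (1 + |ζ_{l+j}|²)^{j}. In particular (l = 0), det( I_n + B((x_1, …, x_n))·B((x_1, …, x_n))* ) = ∏_{j=1}^{n} (1 + |ζ_j|²)^{j}. -/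
open Matrix

/-- The `N×N` lower-triangular Toeplitz matrix with first column `(x_N, …, x_1)`:
its `(i,k)` entry is `x_{N-i+k}` (1-based) when `k ≤ i` and `0` otherwise. -/
noncomputable def Bmat {N : ℕ} (x : Fin N → ℂ) : Matrix (Fin N) (Fin N) ℂ :=
  fun i k =>
    if h : (k : ℕ) ≤ (i : ℕ) then x ⟨N - 1 - i + k, by have h1 := i.isLt; omega⟩ else 0

/-- The singular part `(f)₋` of a Laurent series: the sum of its strictly
negative-degree terms. -/
noncomputable def singPart (f : LaurentSeries ℂ) : LaurentSeries ℂ where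
  coeff k := if k < 0 then f.coeff k else 0
  isPWO_support' := by
    apply f.isPWO_support'.mono
    intro k hk
    simp only [Function.mem_support] at hk ⊢
    by_cases h : k < 0
    · simpa [h] using hk
    · simp [h] at hk

/-- The recursively defined Laurent polynomials `x⁽ᵏ⁾(ζ₁, …, ζ_k)`:
`x⁽¹⁾ = ζ₁ z⁻¹` and
`x⁽ᵏ⁺¹⁾ = ((1+|ζ_{k+1}|²) Σ_{p=0}^k conj(ζ_{k+1})^p (x⁽ᵏ⁾)^{p+1} z^{p(k+1)})₋ + ζ_{k+1} z^{−k−1}`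
(`ζ` is indexed starting at `1`; the base case is subsumed via `x⁽⁰⁾ = 0`). -/
noncomputable def xrec (ζ : ℕ → ℂ) : ℕ → LaurentSeries ℂ
  | 0 => 0
  | m + 1 =>
      singPart (HahnSeries.single (0 : ℤ) (((1 + ‖ζ (m + 1)‖ ^ 2 : ℝ) : ℂ)) *
          ∑ p ∈ Finset.range (m + 1),
            HahnSeries.single (0 : ℤ) ((starRingEnd ℂ (ζ (m + 1))) ^ p) *
              xrec ζ m ^ (p + 1) * HahnSeries.single ((p : ℤ) * ((m : ℤ) + 1)) 1)
        + HahnSeries.single (-(m : ℤ) - 1) (ζ (m + 1))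

/-!
The power series `y_k = z^k x⁽ᵏ⁾` satisfy `y_{k+1} ≡ (ζ + z y_k) / (1 - conj ζ z y_k)` modulo
`z^{k+1}`, where `ζ = ζ_{k+1}`: the sum in the recursion is a truncated geometric series. The
lower-triangular Toeplitz matrices form a quotient of the power series ring, so with `U = T(z y_k)`
and `V = T(y_{k+1})` this reads `D V = ζ + U`, where `D = 1 - conj ζ U` is unitriangular. The
identity `D D* + (ζ + U)(ζ + U)* = (1 + |ζ|²)(1 + U U*)` then gives
`det (1 + V V*) = (1 + |ζ|²)^N det (1 + U U*)`. The factor `z` in `z y_k` makes the first row and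
the last column of `U` vanish, which lowers the size by one, and the product follows by induction.
-/

section MatrixIdentities

variable {R : Type*} [CommRing R]

theorem det_one_add_mul_of_row_zero_of_col_last {M N : ℕ}
    {A : Matrix (Fin (M + 1)) (Fin (N + 1)) R} (B : Matrix (Fin (N + 1)) (Fin (M + 1)) R)
    (hrow : ∀ k, A 0 k = 0) (hcol : ∀ i, A i (Fin.last N) = 0) :
    (1 + A * B).det =
      (1 + A.submatrix Fin.succ Fin.castSucc * B.submatrix Fin.castSucc Fin.succ).det := by
  have hrow_one (k : Fin (M + 1)) :
      (1 + A * B : Matrix (Fin (M + 1)) (Fin (M + 1)) R) 0 k =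
        (1 : Matrix (Fin (M + 1)) (Fin (M + 1)) R) 0 k := by
    simp [mul_apply, hrow]
  have hminor : (1 + A * B).submatrix Fin.succ Fin.succ =
      1 + A.submatrix Fin.succ Fin.castSucc * B.submatrix Fin.castSucc Fin.succ := by
    ext i k
    simp [mul_apply, Fin.sum_univ_castSucc, hcol, one_apply]
  rw [det_succ_row_zero, Fin.sum_univ_succ, ← hminor]
  simp [hrow_one, one_apply_ne (Fin.succ_ne_zero _).symm]

variable [StarRing R]

theorem moebius_mul_star_add_mul_star {A : Type*} [Ring A] [StarRing A] [Algebra R A]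
    [StarModule R A] (z : R) (u : A) :
    (1 - star z • u) * star (1 - star z • u) + (z • 1 + u) * star (z • 1 + u) =
      (1 + z * star z) • (1 + u * star u) := by
  simp only [star_sub, star_add, star_smul, star_one, star_star, mul_add, mul_sub, add_mul,
    sub_mul, one_mul, mul_one, smul_mul_assoc, mul_smul_comm]
  module

theorem det_one_add_mul_conjTranspose_of_moebius {n : Type*} [Fintype n] [DecidableEq n] {z : R}
    {U V : Matrix n n R} (hdet : (1 - star z • U).det = 1)
    (hV : (1 - star z • U) * V = z • 1 + U) :
    (1 + V * Vᴴ).det = (1 + z * star z) ^ Fintype.card n * (1 + U * Uᴴ).det := by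
  set D := 1 - star z • U with hD
  have hconj : D * (1 + V * Vᴴ) * Dᴴ = (1 + z * star z) • (1 + U * Uᴴ) :=
    calc D * (1 + V * Vᴴ) * Dᴴ = D * Dᴴ + D * V * (D * V)ᴴ := by
          rw [conjTranspose_mul]
          noncomm_ring
      _ = (1 + z * star z) • (1 + U * Uᴴ) := by
          rw [hV, hD]
          exact moebius_mul_star_add_mul_star z U
  simpa only [det_mul, det_conjTranspose, hdet, star_one, one_mul, mul_one, det_smul] using
    congrArg det hconj

end MatrixIdentities

section LowerToeplitz

open PowerSeries

theorem coeff_mul_eq_sum_coeff_mul_X_pow {S : Type*} [Semiring S] {N i : ℕ} (hi : i < N)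
    (f g : S⟦X⟧) :
    coeff i (f * g) = ∑ j : Fin N, coeff i (f * X ^ (j : ℕ)) * coeff j g := by
  rw [coeff_mul, ← Finset.Nat.sum_antidiagonal_swap,
    Finset.Nat.sum_antidiagonal_eq_sum_range_succ_mk,
    Fin.sum_univ_eq_sum_range (fun j => coeff i (f * X ^ j) * coeff j g)]
  refine Finset.sum_subset_zero_on_sdiff (Finset.range_subset_range.2 hi) ?_ ?_
  · intro j hj
    simp_all [coeff_mul_X_pow']
  · intro j hj
    simp_all [coeff_mul_X_pow']

section CommSemiring

variable {R : Type*} [CommSemiring R]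

/-- The algebra homomorphism sending `f = ∑ f_j X^j` to the `N × N` lower-triangular Toeplitz
matrix with first column `(f_0, …, f_{N-1})`. Its `k`-th column lists the coefficients of `f X^k`,
so it is multiplication by `f` on `R⟦X⟧ / (X^N)` in the monomial basis. -/
noncomputable def lowerToeplitz (N : ℕ) : R⟦X⟧ →ₐ[R] Matrix (Fin N) (Fin N) R :=
  AlgHom.ofLinearMap
    { toFun f := of fun i k => coeff i (f * X ^ (k : ℕ))
      map_add' f g := by ext; simp [add_mul]
      map_smul' c f := by ext; simp }
    (by ext i k; simp [coeff_X_pow, one_apply, Fin.ext_iff])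
    (fun f g => by
      ext i k
      simpa [mul_apply, mul_assoc] using
        coeff_mul_eq_sum_coeff_mul_X_pow i.isLt f (g * X ^ (k : ℕ)))

theorem lowerToeplitz_apply (N : ℕ) (f : R⟦X⟧) (i k : Fin N) :
    lowerToeplitz N f i k = if k ≤ i then coeff (i - k : ℕ) f else 0 :=
  coeff_mul_X_pow' f k i

theorem lowerToeplitz_C (N : ℕ) (r : R) : lowerToeplitz N (C r) = r • 1 := by
  rw [← mul_one (C r), ← smul_eq_C_mul, map_smul, map_one]

theorem lowerToeplitz_C_mul (N : ℕ) (r : R) (f : R⟦X⟧) :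
    lowerToeplitz N (C r * f) = r • lowerToeplitz N f := by
  rw [← smul_eq_C_mul, map_smul]

theorem lowerToeplitz_X_mul_zero_left (N : ℕ) (f : R⟦X⟧) (k : Fin (N + 1)) :
    lowerToeplitz (N + 1) (X * f) 0 k = 0 := by
  simp [lowerToeplitz_apply]

theorem lowerToeplitz_X_mul_last_right (N : ℕ) (f : R⟦X⟧) (i : Fin (N + 1)) :
    lowerToeplitz (N + 1) (X * f) i (Fin.last N) = 0 := by
  have hi : (i : ℕ) - N = 0 := by omega
  simp [lowerToeplitz_apply, hi]

theorem lowerToeplitz_X_mul_submatrix (N : ℕ) (f : R⟦X⟧) :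
    (lowerToeplitz (N + 1) (X * f)).submatrix Fin.succ Fin.castSucc = lowerToeplitz N f := by
  ext i k
  change coeff (i + 1 : ℕ) (X * f * X ^ (k : ℕ)) = coeff i (f * X ^ (k : ℕ))
  rw [mul_assoc, coeff_succ_X_mul]

end CommSemiring

variable {R : Type*} [CommRing R]

theorem det_lowerToeplitz (N : ℕ) (f : R⟦X⟧) :
    (lowerToeplitz N f).det = constantCoeff f ^ N := by
  have htri : (lowerToeplitz N f).IsLowerTriangular := fun i k (hik : i < k) => by
    rw [lowerToeplitz_apply, if_neg hik.not_ge]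
  simp [det_of_isLowerTriangular _ htri, lowerToeplitz_apply]

theorem lowerToeplitz_eq_of_X_pow_dvd_sub {N : ℕ} {f g : R⟦X⟧} (h : X ^ N ∣ f - g) :
    lowerToeplitz N f = lowerToeplitz N g := by
  ext i k
  have hcoeff : coeff (i - k : ℕ) f = coeff (i - k : ℕ) g :=
    sub_eq_zero.1 (X_pow_dvd_iff.1 h _ (by omega))
  simp only [lowerToeplitz_apply, hcoeff]

variable [StarRing R]

theorem det_one_add_lowerToeplitz_X_mul_mul_conjTranspose (N : ℕ) (f : R⟦X⟧) :
    (1 + lowerToeplitz (N + 1) (X * f) * (lowerToeplitz (N + 1) (X * f))ᴴ).det =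
      (1 + lowerToeplitz N f * (lowerToeplitz N f)ᴴ).det := by
  rw [det_one_add_mul_of_row_zero_of_col_last _ (lowerToeplitz_X_mul_zero_left N f)
    (lowerToeplitz_X_mul_last_right N f), ← conjTranspose_submatrix, lowerToeplitz_X_mul_submatrix]

end LowerToeplitz

section SchurStep

open PowerSeries

variable {R : Type*} [CommRing R]

theorem X_pow_dvd_trunc_sub (n : ℕ) (f : R⟦X⟧) : X ^ n ∣ (trunc n f : R⟦X⟧) - f := by
  rw [dvd_sub_comm]
  nth_rewrite 1 [eq_X_pow_mul_shift_add_trunc n f]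
  simp

theorem one_sub_mul_geom_sum_add (a z u : R) (m : ℕ) :
    (1 - a * u) * ((1 + z * a) * ∑ p ∈ Finset.range m, a ^ p * u ^ (p + 1) + z) =
      z + u - (1 + z * a) * a ^ m * u ^ (m + 1) := by
  have hgeom : (1 - a * u) * ∑ p ∈ Finset.range m, a ^ p * u ^ (p + 1) = u * (1 - (a * u) ^ m) := by
    rw [← mul_neg_geom_sum, mul_left_comm u, Finset.mul_sum _ _ u]
    simp only [mul_pow, pow_succ', mul_left_comm u]
  linear_combination (1 + z * a) * hgeom

variable [StarRing R]

/-- The congruence `g ≡ (z + X f) / (1 - conj z X f)` modulo `X ^ N` with its denominator cleared: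
one step of the inverse Schur algorithm (with the sign convention of `SU(2)`). -/
def IsSchurStep (N : ℕ) (z : R) (f g : R⟦X⟧) : Prop :=
  X ^ N ∣ (1 - C (star z) * (X * f)) * g - (C z + X * f)

theorem IsSchurStep.mono {M N : ℕ} {z : R} {f g : R⟦X⟧} (h : IsSchurStep N z f g) (hMN : M ≤ N) :
    IsSchurStep M z f g :=
  (pow_dvd_pow X hMN).trans h

theorem IsSchurStep.congr_right {N : ℕ} {z : R} {f g g' : R⟦X⟧} (h : IsSchurStep N z f g)
    (hg : X ^ N ∣ g' - g) : IsSchurStep N z f g' := by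
  have hsum := dvd_add (hg.mul_left (1 - C (star z) * (X * f))) h
  rwa [← add_sub_assoc, ← mul_add, sub_add_cancel] at hsum

theorem IsSchurStep.det_one_add_lowerToeplitz_mul_conjTranspose {N : ℕ} {z : R} {f g : R⟦X⟧}
    (h : IsSchurStep N z f g) :
    (1 + lowerToeplitz N g * (lowerToeplitz N g)ᴴ).det =
      (1 + z * star z) ^ N *
        (1 + lowerToeplitz N (X * f) * (lowerToeplitz N (X * f))ᴴ).det := by
  have hD : lowerToeplitz N (1 - C (star z) * (X * f)) =
      1 - star z • lowerToeplitz N (X * f) := by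
    rw [map_sub, map_one, lowerToeplitz_C_mul]
  have hdet : (1 - star z • lowerToeplitz N (X * f)).det = 1 := by
    rw [← hD, det_lowerToeplitz]
    simp
  have hstep := lowerToeplitz_eq_of_X_pow_dvd_sub h
  rw [map_mul, hD, map_add, lowerToeplitz_C] at hstep
  simpa using det_one_add_mul_conjTranspose_of_moebius hdet hstep

theorem det_one_add_lowerToeplitz_mul_conjTranspose_of_isSchurStep {ζ : ℕ → R} {y : ℕ → R⟦X⟧}
    (hy : ∀ m, IsSchurStep (m + 1) (ζ (m + 1)) (y m) (y (m + 1))) (l N : ℕ) :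
    (1 + lowerToeplitz N (y (l + N)) * (lowerToeplitz N (y (l + N)))ᴴ).det =
      ∏ j ∈ Finset.Icc 1 N, (1 + ζ (l + j) * star (ζ (l + j))) ^ j := by
  induction N with
  | zero => simp
  | succ N ih =>
    have hstep : IsSchurStep (N + 1) (ζ (l + N + 1)) (y (l + N)) (y (l + N + 1)) :=
      (hy (l + N)).mono (by omega)
    rw [← add_assoc, hstep.det_one_add_lowerToeplitz_mul_conjTranspose,
      det_one_add_lowerToeplitz_X_mul_mul_conjTranspose, ih,
      Finset.prod_Icc_succ_top (by omega), mul_comm, add_assoc]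

/-- `C (1 + z conj z) ∑_{p < n} conj z ^ p (X f)^{p+1}`: the bracket in the recursion for `x⁽ⁿ⁾`,
multiplied by `X ^ n` so as to be a power series in `f = X ^ (n - 1) x⁽ⁿ⁻¹⁾`. -/
noncomputable def schurSum (n : ℕ) (z : R) (f : R⟦X⟧) : R⟦X⟧ :=
  C (1 + z * star z) * ∑ p ∈ Finset.range n, C (star z ^ p) * (X * f) ^ (p + 1)

theorem isSchurStep_schurSum_add_C (n : ℕ) (z : R) (f : R⟦X⟧) :
    IsSchurStep n z f (schurSum n z f + C z) := by
  have hgeom := one_sub_mul_geom_sum_add (C (star z)) (C z) (X * f) n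
  have hsum : (1 - C (star z) * (X * f)) * (schurSum n z f + C z) - (C z + X * f) =
      -((1 + C z * C (star z)) * C (star z) ^ n * (X * f) ^ (n + 1)) := by
    simp only [schurSum, map_add, map_one, map_mul, map_pow]
    linear_combination hgeom
  rw [IsSchurStep, hsum, mul_pow, pow_succ X]
  exact ⟨-((1 + C z * C (star z)) * C (star z) ^ n * X * f ^ (n + 1)), by ring⟩

/-- The power series `X ^ m x⁽ᵐ⁾(ζ₁, …, ζ_m)`; see `xrec_eq_single_mul_schurSeries`. -/
noncomputable def schurSeries (ζ : ℕ → R) : ℕ → R⟦X⟧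
  | 0 => 0
  | m + 1 => (trunc (m + 1) (schurSum (m + 1) (ζ (m + 1)) (schurSeries ζ m)) : R⟦X⟧) +
      C (ζ (m + 1))

theorem isSchurStep_schurSeries (ζ : ℕ → R) (m : ℕ) :
    IsSchurStep (m + 1) (ζ (m + 1)) (schurSeries ζ m) (schurSeries ζ (m + 1)) := by
  refine (isSchurStep_schurSum_add_C _ _ _).congr_right ?_
  rw [schurSeries, add_sub_add_right_eq_sub]
  exact X_pow_dvd_trunc_sub _ _

end SchurStep

section LaurentRecursion

open HahnSeries

theorem singPart_single_mul_ofPowerSeries (n : ℕ) (f : PowerSeries ℂ) :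
    singPart (single (-n : ℤ) 1 * ofPowerSeries ℤ ℂ f) =
      single (-n : ℤ) 1 * ofPowerSeries ℤ ℂ (f.trunc n) := by
  ext k
  simp only [singPart, coeff_single_mul, PowerSeries.coeff_coe, Polynomial.coeff_coe,
    PowerSeries.coeff_trunc]
  split_ifs <;> first | omega | simp

theorem single_mul_sum_eq_single_mul_schurSum (m : ℕ) (z : ℂ) (f : PowerSeries ℂ) :
    single (0 : ℤ) ((1 + ‖z‖ ^ 2 : ℝ) : ℂ) *
        ∑ p ∈ Finset.range (m + 1), single (0 : ℤ) (starRingEnd ℂ z ^ p) *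
          (single (-m : ℤ) 1 * ofPowerSeries ℤ ℂ f) ^ (p + 1) * single ((p : ℤ) * (m + 1)) 1 =
      single (-(m + 1 : ℕ) : ℤ) 1 * ofPowerSeries ℤ ℂ (schurSum (m + 1) z f) := by
  rw [schurSum, map_mul, ofPowerSeries_C, C_apply, mul_left_comm, Complex.star_def,
    Complex.mul_conj', map_sum, Finset.mul_sum _ _ (single (-(m + 1 : ℕ) : ℤ) 1)]
  push_cast
  congr 1
  refine Finset.sum_congr rfl fun p _ => ?_
  have hmonomial : single (-((m : ℤ) + 1)) (1 : ℂ) * single (1 : ℤ) 1 ^ (p + 1) =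
      single (-m : ℤ) 1 ^ (p + 1) * single ((p : ℤ) * (m + 1)) 1 := by
    simp only [single_pow, single_mul_single, one_pow, mul_one, nsmul_eq_mul]
    congr 2
    push_cast
    ring
  rw [ofPowerSeries_C, C_apply, ofPowerSeries_X, mul_pow, mul_pow]
  linear_combination
    -(single (0 : ℤ) (starRingEnd ℂ z ^ p) * ofPowerSeries ℤ ℂ f ^ (p + 1)) * hmonomial

theorem xrec_eq_single_mul_schurSeries (ζ : ℕ → ℂ) (m : ℕ) :
    xrec ζ m = single (-m : ℤ) 1 * ofPowerSeries ℤ ℂ (schurSeries ζ m) := by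
  induction m with
  | zero => simp [xrec, schurSeries]
  | succ m ih =>
    rw [xrec, ih, single_mul_sum_eq_single_mul_schurSum, singPart_single_mul_ofPowerSeries,
      schurSeries, map_add, mul_add, ofPowerSeries_C, C_apply, single_mul_single]
    simp [sub_eq_add_neg, add_comm]

theorem coeff_xrec_sub (ζ : ℕ → ℂ) (m i : ℕ) :
    (xrec ζ m).coeff (i - m) = PowerSeries.coeff i (schurSeries ζ m) := by
  simp [xrec_eq_single_mul_schurSeries, coeff_single_mul]

theorem Bmat_eq_lowerToeplitz {N : ℕ} {x : Fin N → ℂ} {f : PowerSeries ℂ}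
    (h : ∀ i : Fin N, x i.rev = PowerSeries.coeff i f) : Bmat x = lowerToeplitz N f := by
  ext i k
  simp only [lowerToeplitz_apply, Bmat, Fin.val_fin_le]
  split_ifs with hki
  · rw [← h ⟨i - k, by omega⟩]
    congr 1
    ext
    simp only [Fin.val_rev]
    omega
  · rfl

end LaurentRecursion

/-- With `x_j = x_j⁽ⁿ⁾(ζ₁, …, ζ_n)` (the coefficient of `z^{-j}` in `x⁽ⁿ⁾`), for `0 ≤ l < n`:
`det(I + B(x_{l+1}, …, x_n) B(x_{l+1}, …, x_n)*) = ∏_{j=1}^{n-l} (1 + |ζ_{l+j}|²)^j`. -/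
theorem stmt12 (n : ℕ) (hn : 1 ≤ n) (ζ : ℕ → ℂ) (l : ℕ) (hl : l < n) :
    (1 + Bmat (fun i : Fin (n - l) => (xrec ζ n).coeff (-((l : ℤ) + (i : ℕ) + 1))) *
          (Bmat (fun i : Fin (n - l) => (xrec ζ n).coeff (-((l : ℤ) + (i : ℕ) + 1))))ᴴ).det
      = (((∏ j ∈ Finset.Icc 1 (n - l), (1 + ‖ζ (l + j)‖ ^ 2) ^ j : ℝ)) : ℂ) := by
  have hB : Bmat (fun i : Fin (n - l) => (xrec ζ n).coeff (-((l : ℤ) + (i : ℕ) + 1))) =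
      lowerToeplitz (n - l) (schurSeries ζ n) := by
    refine Bmat_eq_lowerToeplitz fun i => ?_
    rw [← coeff_xrec_sub]
    congr 1
    rw [Fin.val_rev]
    omega
  have hdet := det_one_add_lowerToeplitz_mul_conjTranspose_of_isSchurStep
    (isSchurStep_schurSeries ζ) l (n - l)
  rw [Nat.add_sub_cancel' hl.le] at hdet
  rw [hB, hdet]
  simp [Complex.mul_conj']
end

section
/- Let n ≥ 1. The map Φ_n : ℂ^n → ℂ^n defined by Φ_n(ζ_1, …, ζ_n) = ( x_1^{(n)}(ζ_1, …, ζ_n), …, x_n^{(n)}(ζ_1, …, ζ_n) ) is a bijection. -/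
/-- The map `Φ_n : ℂⁿ → ℂⁿ`, `Φ_n(ζ₁, …, ζ_n) = (x₁⁽ⁿ⁾(ζ), …, x_n⁽ⁿ⁾(ζ))`, where
`x_j⁽ⁿ⁾` is the coefficient of `z^{-j}` in `x⁽ⁿ⁾`. -/
noncomputable def Phi (n : ℕ) (ζ : Fin n → ℂ) : Fin n → ℂ :=
  fun j =>
    (xrec (fun i => if h : i - 1 < n ∧ 1 ≤ i then ζ ⟨i - 1, h.1⟩ else 0) n).coeff
      (-((j : ℕ) : ℤ) - 1)

/-! Write `y = x⁽ᵐ⁾` and `t = ζ_{m+1}`. In the coordinates of `ℂᵐ × ℂ`, the recursion sends `(y, t)`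
to `(T_t y, t)`, with `t` the coefficient of `z^{-m-1}`. The `p`-th summand depends on `y` only
through `y^{p+1} z^{p(m+1)}`; as `y` has order at least `-m`, changing `y` in degrees `≥ N` changes
this product only in degrees `≥ N + p`. Hence the coefficient of `z^N` in `T_t y` is
`(1 + |t|²) y_N` plus a function of the coefficients of `y` below `N`. So `T_t` is triangular with
nonzero diagonal, hence bijective, and `Φ_{m+1}` is bijective as soon as `Φ_m` is. -/

open HahnSeries LaurentSeries

theorem bijective_of_triangular {ι M A : Type*} [AddGroup A] (r : ι → ι → Prop)
    [IsWellFounded ι r] (σ : M ≃ A) {F : (ι → M) → ι → A}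
    (hF : ∀ v w i, (∀ j, r j i → v j = w j) → F v i - σ (v i) = F w i - σ (w i)) :
    Function.Bijective F := by
  classical
  constructor
  · intro v w h
    ext i
    induction i using IsWellFounded.induction r with
    | ind i ih => exact σ.injective (sub_right_injective ((congrFun h i) ▸ hF v w i ih))
  · intro b
    let extend (i : ι) (u : ∀ j, r j i → M) (j : ι) : M :=
      if h : r j i then u j h else σ.symm 0
    let solve (i : ι) (u : ∀ j, r j i → M) : M :=
      σ.symm (-(F (extend i u) i - σ (extend i u i)) + b i)
    let v : ι → M := IsWellFounded.fix r solve
    refine ⟨v, funext fun i => ?_⟩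
    have v_eq : v i = solve i fun j _ => v j := IsWellFounded.fix_eq r solve i
    have F_sub := hF v (extend i fun j _ => v j) i fun j hj => by simp only [extend, dif_pos hj]
    rw [sub_eq_iff_eq_add.1 F_sub, v_eq, Equiv.apply_symm_apply, add_neg_cancel_left]

section OrderTop

variable {Γ R : Type*} [LinearOrder Γ]

theorem le_orderTop_sum {ι : Type*} [AddCommMonoid R] {s : Finset ι} {f : ι → R⟦Γ⟧}
    {N : WithTop Γ} (h : ∀ i ∈ s, N ≤ (f i).orderTop) : N ≤ (∑ i ∈ s, f i).orderTop :=
  Finset.sum_induction f (N ≤ ·.orderTop)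
    (fun _ _ hf hg => (le_min hf hg).trans min_orderTop_le_orderTop_add) (by simp) h

theorem add_nsmul_le_orderTop_pow_sub_pow [AddCommMonoid Γ] [IsOrderedCancelAddMonoid Γ] [Ring R]
    {y y' : R⟦Γ⟧} {M N : WithTop Γ}
    (hy : M ≤ y.orderTop) (hy' : M ≤ y'.orderTop) (h : N ≤ (y - y').orderTop) (p : ℕ) :
    N + p • M ≤ (y ^ (p + 1) - y' ^ (p + 1)).orderTop := by
  induction p with
  | zero => simpa using h
  | succ p ih =>
    have telescope : y ^ (p + 1 + 1) - y' ^ (p + 1 + 1)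
        = y ^ (p + 1) * (y - y') + (y ^ (p + 1) - y' ^ (p + 1)) * y' := by
      rw [pow_succ y (p + 1), pow_succ y' (p + 1)]
      noncomm_ring
    rw [telescope]
    refine (le_min ?_ ?_).trans min_orderTop_le_orderTop_add
    · rw [add_comm]
      exact (add_le_add ((nsmul_le_nsmul_right hy _).trans orderTop_nsmul_le_orderTop_pow) h).trans
        orderTop_add_le_mul
    · rw [succ_nsmul, ← add_assoc]
      exact (add_le_add ih hy').trans orderTop_add_le_mul

end OrderTop

section GeomStep

variable {R : Type*} [CommRing R] {m : ℕ} {a c : R} {y y' : R⸨X⸩} {N : ℤ}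

/-- The Laurent series `a Σ_{p ≤ m} c^p y^{p+1} z^{p(m+1)}`. For `y = x⁽ᵐ⁾`, `a = 1 + |ζ_{m+1}|²`
and `c = conj ζ_{m+1}`, its singular part is the first summand of `x⁽ᵐ⁺¹⁾`. -/
noncomputable def geomStep (m : ℕ) (a c : R) (y : R⸨X⸩) : R⸨X⸩ :=
  single 0 a * ∑ p ∈ Finset.range (m + 1),
    single 0 (c ^ p) * y ^ (p + 1) * single ((p : ℤ) * ((m : ℤ) + 1)) 1

theorem geomStep_zero : geomStep m a c 0 = 0 := by
  simp [geomStep]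

theorem geomStep_sub_geomStep : geomStep m a c y - geomStep m a c y' - single 0 a * (y - y') =
    single 0 a * ∑ p ∈ Finset.range m, single 0 (c ^ (p + 1)) *
      (y ^ (p + 1 + 1) - y' ^ (p + 1 + 1)) * single (((p + 1 : ℕ) : ℤ) * ((m : ℤ) + 1)) 1 := by
  simp only [geomStep, Finset.sum_range_succ', mul_sub, sub_mul, Finset.sum_sub_distrib, mul_add,
    pow_zero, zero_add, pow_one, Nat.cast_zero, zero_mul, single_zero_one, one_mul, mul_one]
  ring

theorem add_one_le_orderTop_geomStep_sub (hy : ((-m : ℤ) : WithTop ℤ) ≤ y.orderTop)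
    (hy' : ((-m : ℤ) : WithTop ℤ) ≤ y'.orderTop) (h : (N : WithTop ℤ) ≤ (y - y').orderTop) :
    ((N + 1 : ℤ) : WithTop ℤ) ≤
      (geomStep m a c y - geomStep m a c y' - single 0 a * (y - y')).orderTop := by
  rw [geomStep_sub_geomStep, ← zero_add ((N + 1 : ℤ) : WithTop ℤ)]
  refine (add_le_add orderTop_single_le (le_orderTop_sum fun p _ => ?_)).trans orderTop_add_le_mul
  calc ((N + 1 : ℤ) : WithTop ℤ)
      ≤ ((0 + (N + (p + 1) • (-m : ℤ)) + ((p + 1 : ℕ) : ℤ) * ((m : ℤ) + 1) : ℤ) : WithTop ℤ) := by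
        rw [WithTop.coe_le_coe]
        push_cast [nsmul_eq_mul]
        linarith
    _ = (0 : ℤ) + ((N : WithTop ℤ) + (p + 1) • ((-m : ℤ) : WithTop ℤ))
          + ((((p + 1 : ℕ) : ℤ) * ((m : ℤ) + 1) : ℤ) : WithTop ℤ) := by
        simp only [WithTop.coe_add, WithTop.coe_nsmul]
    _ ≤ _ := (add_le_add ((add_le_add orderTop_single_le
          (add_nsmul_le_orderTop_pow_sub_pow hy hy' h (p + 1))).trans orderTop_add_le_mul)
          orderTop_single_le).trans orderTop_add_le_mul

theorem coeff_geomStep_sub_mul_coeff (hy : ((-m : ℤ) : WithTop ℤ) ≤ y.orderTop)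
    (hy' : ((-m : ℤ) : WithTop ℤ) ≤ y'.orderTop) (h : ∀ i < N, y.coeff i = y'.coeff i) :
    (geomStep m a c y).coeff N - a * y.coeff N = (geomStep m a c y').coeff N - a * y'.coeff N := by
  have h_sub : (N : WithTop ℤ) ≤ (y - y').orderTop :=
    le_orderTop_iff_forall.2 fun i hi => by
      rw [coeff_sub, h i (WithTop.coe_lt_coe.1 hi), sub_self]
  have h_coeff := coeff_eq_zero_of_lt_orderTop ((WithTop.coe_lt_coe.2 (lt_add_one N)).trans_le
    (add_one_le_orderTop_geomStep_sub (a := a) (c := c) hy hy' h_sub))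
  simp only [coeff_sub, coeff_single_zero_mul] at h_coeff
  linear_combination h_coeff

theorem le_orderTop_geomStep (hy : ((-m : ℤ) : WithTop ℤ) ≤ y.orderTop) :
    ((-m : ℤ) : WithTop ℤ) ≤ (geomStep m a c y).orderTop := by
  have y_coeff : ∀ i < (-m : ℤ), y.coeff i = 0 := fun i hi =>
    coeff_eq_zero_of_lt_orderTop ((WithTop.coe_lt_coe.2 hi).trans_le hy)
  refine le_orderTop_iff_forall.2 fun i hi => ?_
  rw [WithTop.coe_lt_coe] at hi
  simpa [geomStep_zero, y_coeff i hi] using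
    coeff_geomStep_sub_mul_coeff (a := a) (c := c) (y' := 0) hy (by simp)
      fun j hj => y_coeff j (hj.trans hi)

end GeomStep

section PrincipalPart

variable {R : Type*} [AddCommMonoid R] {n : ℕ}

/-- The Laurent polynomial `v₀ z⁻¹ + … + v_{n-1} z⁻ⁿ` with coordinates `v`, indexed as in `Phi`. -/
noncomputable def principalPart (v : Fin n → R) : R⸨X⸩ :=
  ∑ j : Fin n, single (-(j : ℤ) - 1) (v j)

theorem coeff_principalPart (v : Fin n → R) (j : Fin n) :
    (principalPart v).coeff (-(j : ℤ) - 1) = v j := by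
  rw [principalPart, coeff_sum, Finset.sum_eq_single_of_mem j (Finset.mem_univ j),
    coeff_single_same]
  exact fun k _ hk => coeff_single_of_ne (by omega)

theorem coeff_principalPart_congr {v w : Fin n → R} {i : ℤ}
    (h : ∀ j : Fin n, i = -(j : ℤ) - 1 → v j = w j) :
    (principalPart v).coeff i = (principalPart w).coeff i := by
  simp only [principalPart, coeff_sum]
  refine Finset.sum_congr rfl fun j _ => ?_
  by_cases hj : i = -(j : ℤ) - 1
  · rw [h j hj]
  · rw [coeff_single_of_ne hj, coeff_single_of_ne hj]

theorem coeff_principalPart_of_nonneg (v : Fin n → R) {i : ℤ} (hi : 0 ≤ i) :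
    (principalPart v).coeff i = 0 := by
  rw [principalPart, coeff_sum]
  exact Finset.sum_eq_zero fun j _ => coeff_single_of_ne (by omega)

theorem le_orderTop_principalPart (v : Fin n → R) :
    ((-n : ℤ) : WithTop ℤ) ≤ (principalPart v).orderTop :=
  le_orderTop_sum fun j _ => (WithTop.coe_le_coe.2 (by omega)).trans orderTop_single_le

theorem principalPart_eq_of_coeff {v : Fin n → R} {f : R⸨X⸩}
    (hf : ((-n : ℤ) : WithTop ℤ) ≤ f.orderTop) (hf_nonneg : ∀ i, 0 ≤ i → f.coeff i = 0)
    (hv : ∀ j : Fin n, f.coeff (-(j : ℤ) - 1) = v j) : principalPart v = f := by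
  ext i
  rcases lt_or_ge i (-n : ℤ) with h_lt | h_ge
  · have hi := WithTop.coe_lt_coe.2 h_lt
    rw [coeff_eq_zero_of_lt_orderTop (hi.trans_le (le_orderTop_principalPart v)),
      coeff_eq_zero_of_lt_orderTop (hi.trans_le hf)]
  rcases lt_or_ge i 0 with h_neg | h_nonneg
  · obtain ⟨j, rfl⟩ : ∃ j : Fin n, i = -(j : ℤ) - 1 :=
      ⟨⟨(-i - 1).toNat, by omega⟩, by simp only; omega⟩
    rw [coeff_principalPart, hv]
  · rw [hf_nonneg i h_nonneg, coeff_principalPart_of_nonneg v h_nonneg]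

end PrincipalPart

section CoeffStep

variable {R : Type*} [CommRing R] {n : ℕ}

/-- The singular part of `geomStep` as a map on coordinates; `T_t` is the case `a = 1 + |t|²`,
`c = conj t`. -/
noncomputable def coeffStep (a c : R) (v : Fin n → R) : Fin n → R :=
  fun j => (geomStep n a c (principalPart v)).coeff (-(j : ℤ) - 1)

theorem coeffStep_sub_mul {a c : R} {v w : Fin n → R} {j : Fin n} (h : ∀ k > j, v k = w k) :
    coeffStep a c v j - a * v j = coeffStep a c w j - a * w j := by
  have h_below : ∀ i < -(j : ℤ) - 1, (principalPart v).coeff i = (principalPart w).coeff i :=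
    fun i hi => coeff_principalPart_congr fun k hk => h k (by omega)
  simpa only [coeffStep, coeff_principalPart] using coeff_geomStep_sub_mul_coeff (a := a) (c := c)
    (le_orderTop_principalPart v) (le_orderTop_principalPart w) h_below

theorem coeffStep_bijective {a : R} (ha : IsUnit a) (c : R) :
    Function.Bijective (coeffStep (n := n) a c) := by
  obtain ⟨u, rfl⟩ := ha
  exact bijective_of_triangular (· > ·) u.mulLeft fun _ _ _ => coeffStep_sub_mul

end CoeffStep

section SingPart

theorem coeff_singPart_of_neg (f : ℂ⸨X⸩) {i : ℤ} (hi : i < 0) :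
    (singPart f).coeff i = f.coeff i := if_pos hi

theorem coeff_singPart_of_nonneg (f : ℂ⸨X⸩) {i : ℤ} (hi : 0 ≤ i) :
    (singPart f).coeff i = 0 := if_neg hi.not_gt

theorem orderTop_le_orderTop_singPart (f : ℂ⸨X⸩) : f.orderTop ≤ (singPart f).orderTop :=
  le_orderTop_iff_forall.2 fun i hi => by
    rcases lt_or_ge i 0 with h_neg | h_nonneg
    · rw [coeff_singPart_of_neg f h_neg, coeff_eq_zero_of_lt_orderTop hi]
    · exact coeff_singPart_of_nonneg f h_nonneg

end SingPart

section Recursion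

variable (ζ : ℕ → ℂ) (m : ℕ)

theorem xrec_succ : xrec ζ (m + 1) =
    singPart (geomStep m ((1 + ‖ζ (m + 1)‖ ^ 2 : ℝ) : ℂ) (starRingEnd ℂ (ζ (m + 1))) (xrec ζ m))
      + single (-(m : ℤ) - 1) (ζ (m + 1)) := rfl

variable {ζ m} in
theorem xrec_congr {η : ℕ → ℂ} (h : ∀ i < m, ζ (i + 1) = η (i + 1)) :
    xrec ζ m = xrec η m := by
  induction m with
  | zero => rfl
  | succ m ih => rw [xrec_succ, xrec_succ, ih fun i hi => h i (by omega), h m (by omega)]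

theorem coeff_xrec_of_nonneg {i : ℤ} (hi : 0 ≤ i) : (xrec ζ m).coeff i = 0 := by
  cases m with
  | zero => rfl
  | succ m =>
    rw [xrec_succ, coeff_add, coeff_singPart_of_nonneg _ hi, coeff_single_of_ne (by omega),
      add_zero]

theorem le_orderTop_xrec : ((-m : ℤ) : WithTop ℤ) ≤ (xrec ζ m).orderTop := by
  induction m with
  | zero => simp [xrec]
  | succ m ih =>
    rw [xrec_succ]
    refine (le_min ?_ ?_).trans min_orderTop_le_orderTop_add
    · exact (WithTop.coe_le_coe.2 (by omega)).trans
        ((le_orderTop_geomStep ih).trans (orderTop_le_orderTop_singPart _))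
    · exact (WithTop.coe_le_coe.2 (by omega)).trans orderTop_single_le

theorem coeff_xrec_succ_last : (xrec ζ (m + 1)).coeff (-(m : ℤ) - 1) = ζ (m + 1) := by
  have h_lt : ((-(m : ℤ) - 1 : ℤ) : WithTop ℤ) < (-m : ℤ) := WithTop.coe_lt_coe.2 (by omega)
  rw [xrec_succ, coeff_add, coeff_singPart_of_neg _ (by omega),
    coeff_eq_zero_of_lt_orderTop (h_lt.trans_le (le_orderTop_geomStep (le_orderTop_xrec ζ m))),
    coeff_single_same, zero_add]

theorem coeff_xrec_succ_of_lt {j : ℕ} (hj : j < m) :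
    (xrec ζ (m + 1)).coeff (-(j : ℤ) - 1) =
      (geomStep m ((1 + ‖ζ (m + 1)‖ ^ 2 : ℝ) : ℂ) (starRingEnd ℂ (ζ (m + 1)))
        (xrec ζ m)).coeff (-(j : ℤ) - 1) := by
  rw [xrec_succ, coeff_add, coeff_singPart_of_neg _ (by omega), coeff_single_of_ne (by omega),
    add_zero]

end Recursion

section Phi

variable {n : ℕ}

theorem Phi_eq_coeff_xrec {ζ : Fin n → ℂ} {η : ℕ → ℂ} (h : ∀ j : Fin n, η (j + 1) = ζ j)
    (j : Fin n) : Phi n ζ j = (xrec η n).coeff (-(j : ℤ) - 1) := by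
  have h_ext : ∀ i < n,
      (if h : (i + 1) - 1 < n ∧ 1 ≤ i + 1 then ζ ⟨(i + 1) - 1, h.1⟩ else 0) = η (i + 1) := by
    intro i hi
    simp [hi, h ⟨i, hi⟩]
  rw [Phi, xrec_congr h_ext]

theorem principalPart_Phi {ζ : Fin n → ℂ} {η : ℕ → ℂ} (h : ∀ j : Fin n, η (j + 1) = ζ j) :
    principalPart (Phi n ζ) = xrec η n :=
  principalPart_eq_of_coeff (le_orderTop_xrec η n) (fun _ hi => coeff_xrec_of_nonneg η n hi)
    fun j => (Phi_eq_coeff_xrec h j).symm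

theorem Phi_snoc (ζ : Fin n → ℂ) (t : ℂ) :
    Phi (n + 1) (Fin.snoc ζ t : Fin (n + 1) → ℂ) =
      Fin.snoc (coeffStep ((1 + ‖t‖ ^ 2 : ℝ) : ℂ) (starRingEnd ℂ t) (Phi n ζ)) t := by
  let η : ℕ → ℂ := fun i => if h : i - 1 < n then ζ ⟨i - 1, h⟩ else t
  have η_init : ∀ j : Fin n, η (j + 1) = ζ j := fun j => by simp [η]
  have η_last : η (n + 1) = t := by simp [η]
  have η_snoc : ∀ j : Fin (n + 1), η (j + 1) = (Fin.snoc ζ t : Fin (n + 1) → ℂ) j :=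
    Fin.lastCases (by simpa using η_last) fun j => by simpa using η_init j
  ext j
  rw [Phi_eq_coeff_xrec η_snoc]
  induction j using Fin.lastCases with
  | last => rw [Fin.snoc_last, Fin.val_last, coeff_xrec_succ_last, η_last]
  | cast j =>
    rw [Fin.snoc_castSucc, Fin.val_castSucc, coeff_xrec_succ_of_lt η n j.isLt, η_last,
      ← principalPart_Phi η_init, coeffStep]

theorem Phi_succ_bijective (h : Function.Bijective (Phi n)) :
    Function.Bijective (Phi (n + 1)) := by
  have step_bijective (t : ℂ) : Function.Bijective
      (coeffStep (n := n) ((1 + ‖t‖ ^ 2 : ℝ) : ℂ) (starRingEnd ℂ t)) :=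
    coeffStep_bijective (isUnit_iff_ne_zero.2 (by norm_cast; positivity)) _
  let fiberwise : ℂ × (Fin n → ℂ) ≃ ℂ × (Fin n → ℂ) :=
    Equiv.prodShear (Equiv.refl ℂ) fun t => (Equiv.ofBijective _ h).trans
      (Equiv.ofBijective _ (step_bijective t))
  let snoc := Fin.snocEquiv fun _ : Fin (n + 1) => ℂ
  have Phi_comp_snoc : Phi (n + 1) ∘ snoc = snoc ∘ fiberwise :=
    funext fun ⟨t, ζ⟩ => Phi_snoc ζ t
  rw [← snoc.bijective.of_comp_iff, Phi_comp_snoc]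
  exact snoc.bijective.comp fiberwise.bijective

end Phi

/-- `Φ_n : ℂⁿ → ℂⁿ` is a bijection. -/
theorem stmt13 (n : ℕ) (hn : 1 ≤ n) : Function.Bijective (Phi n) := by
  clear hn
  induction n with
  | zero => exact ⟨Function.injective_of_subsingleton _, Function.surjective_to_subsingleton _⟩
  | succ n ih => exact Phi_succ_bijective ih
end
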